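/- arXiv:1607.03286 — 2 statements merged into one kernel-verified Lean document; each statement's English description precedes it below -/
import Mathlib

section
/- Let D be a dcpo. For all closed irreducible subsets A', A of D, the relation A' ◁ A implies A' ≺ A (where ≺ is taken in the scpo D̂). Moreover, D is dominated if and only if, conversely, A' ≺ A implies A' ◁ A for all A', A ∈ D̂. -/
namespace HoZhao

variable {α : Type*}

/-- A set is Scott-closed if it is a lower set and contains the supremum of each of its
nonempty directed subsets. -/
def ScottClosed [Preorder α] (S : Set α) : Prop :=
  IsLowerSet S ∧ ∀ d : Set α, d ⊆ S → d.Nonempty → DirectedOn (· ≤ ·) d →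
    ∀ a : α, IsLUB d a → a ∈ S

/-- A nonempty set is irreducible if whenever it is covered by two Scott-closed sets it is
contained in one of them. -/
def ScottIrred [Preorder α] (A : Set α) : Prop :=
  A.Nonempty ∧ ∀ B C : Set α, ScottClosed B → ScottClosed C → A ⊆ B ∪ C → A ⊆ B ∨ A ⊆ C

/-- A dcpo: every nonempty directed subset has a supremum. -/
def IsDcpo (α : Type*) [Preorder α] : Prop :=
  ∀ d : Set α, d.Nonempty → DirectedOn (· ≤ ·) d → ∃ a : α, IsLUB d a

/-- The order sobrification: the poset of Scott-closed irreducible subsets, ordered by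
inclusion. -/
abbrev OrderSob (α : Type*) [Preorder α] :=
  {A : Set α // ScottClosed A ∧ ScottIrred A}

/-- x' ≺ x : for every closed irreducible set A with x ≤ sup A, one has x' ∈ A. -/
def Prec [Preorder α] (x' x : α) : Prop :=
  ∀ A : Set α, ScottClosed A → ScottIrred A → ∀ a : α, IsLUB A a → x ≤ a → x' ∈ A

/-- A' ◁ A : A' is contained in ↓x for some x ∈ A. -/
def Tri [Preorder α] (A' A : OrderSob α) : Prop :=
  ∃ x ∈ (A : Set α), (A' : Set α) ⊆ {y : α | y ≤ x}

/-- ∇A = the collection of all A' ◁ A. -/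
def Nabla [Preorder α] (A : OrderSob α) : Set (OrderSob α) := {A' | Tri A' A}

/-- A dcpo is dominated if ∇A is Scott-closed in the order sobrification, for every A. -/
def Dominated (α : Type*) [Preorder α] : Prop :=
  ∀ A : OrderSob α, ScottClosed (Nabla A)

/-!
Write `η x` for the principal ideal `↓x`. The map `η : D → D̂` is Scott-continuous, `∇A` is the
lower closure of `η '' A`, and hence `∇A` is irreducible with supremum `A`. If `𝒜` is an
irreducible family in `D̂`, its union is irreducible in `D`, so `sup 𝒜` is the Scott closure of that
union. If `𝒜` is moreover closed, then `η ⁻¹' 𝒜` is closed and contains the union, so `η x ∈ 𝒜` for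
every `x ∈ sup 𝒜`. This gives `◁ → ≺`. When `∇A` is closed, testing `A' ≺ A` against it gives
`A' ◁ A`; conversely, if `≺` and `◁` agree, then `∇A = {A' | A' ≺ A}` is an intersection of closed
sets.
-/

open Set Topology Topology.IsScott

theorem isIrreducible_biUnion_of_directedOn {ι X : Type*} [TopologicalSpace X] {s : Set ι}
    {f : ι → Set X} (hs : s.Nonempty) (hdir : DirectedOn (fun i j => f i ⊆ f j) s)
    (hf : ∀ i ∈ s, IsIrreducible (f i)) : IsIrreducible (⋃ i ∈ s, f i) := by
  refine ⟨nonempty_biUnion.2 (hs.imp fun i hi => ⟨hi, (hf i hi).nonempty⟩), ?_⟩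
  rintro U V hU hV ⟨x, hx, hxU⟩ ⟨y, hy, hyV⟩
  obtain ⟨i, hi, hxi⟩ := mem_iUnion₂.1 hx
  obtain ⟨j, hj, hyj⟩ := mem_iUnion₂.1 hy
  obtain ⟨k, hk, hik, hjk⟩ := hdir i hi j hj
  have hmeet : (f k ∩ (U ∩ V)).Nonempty :=
    (hf k hk).isPreirreducible U V hU hV ⟨x, hik hxi, hxU⟩ ⟨y, hjk hyj, hyV⟩
  exact hmeet.mono (inter_subset_inter_left _ (subset_biUnion_of_mem hk))

section ScottTopology

variable [Preorder α] [TopologicalSpace α] [IsScott α univ] {S : Set α}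

theorem scottClosed_iff_isClosed : ScottClosed S ↔ IsClosed S :=
  isClosed_iff_isLowerSet_and_dirSupClosed.symm

theorem scottIrred_iff_isIrreducible : ScottIrred S ↔ IsIrreducible S := by
  simp only [ScottIrred, scottClosed_iff_isClosed, IsIrreducible,
    isPreirreducible_iff_isClosed_union_isClosed]

theorem closure_lowerClosure (S : Set α) : closure (lowerClosure S : Set α) = closure S :=
  (closure_minimal lowerClosure_subset_closure isClosed_closure).antisymm
    (closure_mono subset_lowerClosure)

theorem isIrreducible_lowerClosure (hS : IsIrreducible S) :
    IsIrreducible (lowerClosure S : Set α) := by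
  rwa [← isIrreducible_iff_closure, closure_lowerClosure, isIrreducible_iff_closure]

theorem continuous_of_scottContinuous {β : Type*} [Preorder β] [TopologicalSpace β]
    [IsScott β univ] {f : α → β} (hf : ScottContinuous f) : Continuous f :=
  (scottContinuousOn_iff_continuous fun _ _ _ => mem_univ _).1 (scottContinuousOn_univ.2 hf)

end ScottTopology

section Principal

variable [Preorder α]

theorem scottClosed_Iic (x : α) : ScottClosed (Iic x) :=
  ⟨isLowerSet_Iic x, fun _ hd _ _ _ ha => ha.2 hd⟩

theorem scottIrred_Iic (x : α) : ScottIrred (Iic x) := by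
  let _ : TopologicalSpace α := scott α univ
  have _ : IsScott α univ := ⟨rfl⟩
  rw [scottIrred_iff_isIrreducible, ← IsScott.closure_singleton]
  exact isIrreducible_singleton.closure

/-- The principal ideal `↓x` as a point of the order sobrification: the unit `D → D̂`. -/
def principal (x : α) : OrderSob α :=
  ⟨Iic x, scottClosed_Iic x, scottIrred_Iic x⟩

theorem principal_le_iff {x : α} {A : OrderSob α} : principal x ≤ A ↔ x ∈ (A : Set α) :=
  ⟨fun h => h le_rfl, fun hx _ hy => A.2.1.1 hy hx⟩

theorem tri_iff_exists_le_principal {A' A : OrderSob α} :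
    Tri A' A ↔ ∃ x ∈ (A : Set α), A' ≤ principal x :=
  Iff.rfl

theorem scottContinuous_principal : ScottContinuous (principal : α → OrderSob α) := by
  intro d hne hdir a ha
  refine ⟨?_, fun C hC => principal_le_iff.2 (C.2.1.2 d (fun x hx => ?_) hne hdir a ha)⟩
  · rintro _ ⟨x, hx, rfl⟩
    exact principal_le_iff.2 (ha.1 hx)
  · exact principal_le_iff.1 (hC (mem_image_of_mem principal hx))

theorem isLUB_image_principal (A : OrderSob α) : IsLUB (principal '' (A : Set α)) A := by
  refine ⟨?_, fun B hB x hx => principal_le_iff.1 (hB (mem_image_of_mem principal hx))⟩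
  rintro _ ⟨x, hx, rfl⟩
  exact principal_le_iff.2 hx

theorem nabla_eq_lowerClosure (A : OrderSob α) :
    Nabla A = lowerClosure (principal '' (A : Set α)) := by
  ext A'
  simp only [Nabla, mem_ofPred_eq, tri_iff_exists_le_principal, SetLike.mem_coe, mem_lowerClosure,
    exists_mem_image]

theorem isLUB_nabla (A : OrderSob α) : IsLUB (Nabla A) A := by
  rw [nabla_eq_lowerClosure, IsLUB, upperBounds_lowerClosure]
  exact isLUB_image_principal A

theorem scottIrred_nabla (A : OrderSob α) : ScottIrred (Nabla A) := by
  let _ : TopologicalSpace α := scott α univ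
  let _ : TopologicalSpace (OrderSob α) := scott (OrderSob α) univ
  have _ : IsScott α univ := ⟨rfl⟩
  have _ : IsScott (OrderSob α) univ := ⟨rfl⟩
  rw [nabla_eq_lowerClosure, scottIrred_iff_isIrreducible]
  exact isIrreducible_lowerClosure <| (scottIrred_iff_isIrreducible.1 A.2.2).image principal
    (continuous_of_scottContinuous scottContinuous_principal).continuousOn

end Principal

section Suprema

variable [Preorder α] [TopologicalSpace α] [IsScott α univ] {𝒜 : Set (OrderSob α)}

theorem coe_eq_closure_biUnion_of_isLUB (hirr : IsIrreducible (⋃ E ∈ 𝒜, (E : Set α)))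
    {A : OrderSob α} (hA : IsLUB 𝒜 A) : (A : Set α) = closure (⋃ E ∈ 𝒜, (E : Set α)) := by
  let K : OrderSob α := ⟨closure (⋃ E ∈ 𝒜, (E : Set α)),
    scottClosed_iff_isClosed.2 isClosed_closure, scottIrred_iff_isIrreducible.2 hirr.closure⟩
  have hK : K ∈ upperBounds 𝒜 := fun E hE => (subset_biUnion_of_mem hE).trans subset_closure
  have hAK : A ≤ K := hA.2 hK
  exact Subset.antisymm hAK
    (closure_minimal (iUnion₂_subset fun E hE => hA.1 hE) (scottClosed_iff_isClosed.1 A.2.1))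

variable [TopologicalSpace (OrderSob α)] [IsScott (OrderSob α) univ]

theorem isOpen_setOf_inter_nonempty {U : Set α} (hU : IsOpen U) :
    IsOpen {E : OrderSob α | ((E : Set α) ∩ U).Nonempty} := by
  refine (isOpen_iff_isUpperSet_and_dirSupInaccOn (D := univ)).2
    ⟨fun E F hEF hE => hE.mono (inter_subset_inter_left U hEF), ?_⟩
  intro 𝒟 _ hne hdir A hA hAU
  have hirr : IsIrreducible (⋃ E ∈ 𝒟, (E : Set α)) :=
    isIrreducible_biUnion_of_directedOn hne hdir fun E _ => scottIrred_iff_isIrreducible.1 E.2.2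
  rw [mem_ofPred_eq, coe_eq_closure_biUnion_of_isLUB hirr hA,
    closure_inter_open_nonempty_iff hU] at hAU
  obtain ⟨x, hx, hxU⟩ := hAU
  obtain ⟨E, hE, hxE⟩ := mem_iUnion₂.1 hx
  exact ⟨E, hE, x, hxE, hxU⟩

theorem isIrreducible_biUnion_coe (h𝒜 : IsIrreducible 𝒜) :
    IsIrreducible (⋃ E ∈ 𝒜, (E : Set α)) := by
  refine ⟨nonempty_biUnion.2 (h𝒜.nonempty.imp fun E hE => ⟨hE, E.2.2.1⟩), ?_⟩
  rintro U V hU hV ⟨x, hx, hxU⟩ ⟨y, hy, hyV⟩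
  obtain ⟨E, hE, hxE⟩ := mem_iUnion₂.1 hx
  obtain ⟨F, hF, hyF⟩ := mem_iUnion₂.1 hy
  obtain ⟨G, hG, hGU, hGV⟩ := h𝒜.isPreirreducible _ _ (isOpen_setOf_inter_nonempty hU)
    (isOpen_setOf_inter_nonempty hV) ⟨E, hE, x, hxE, hxU⟩ ⟨F, hF, y, hyF, hyV⟩
  have hmeet : ((G : Set α) ∩ (U ∩ V)).Nonempty :=
    (scottIrred_iff_isIrreducible.1 G.2.2).isPreirreducible U V hU hV hGU hGV
  exact hmeet.mono (inter_subset_inter_left _ (subset_biUnion_of_mem hG))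

theorem principal_mem_of_mem_of_isLUB (hclosed : IsClosed 𝒜) (hirr : IsIrreducible 𝒜)
    {A : OrderSob α} (hA : IsLUB 𝒜 A) {x : α} (hx : x ∈ (A : Set α)) : principal x ∈ 𝒜 := by
  have hpreimage : IsClosed (principal ⁻¹' 𝒜) :=
    hclosed.preimage (continuous_of_scottContinuous scottContinuous_principal)
  have hunion : ⋃ E ∈ 𝒜, (E : Set α) ⊆ principal ⁻¹' 𝒜 := iUnion₂_subset fun E hE y hy =>
    isLowerSet_of_isClosed hclosed (principal_le_iff.2 hy) hE
  rw [coe_eq_closure_biUnion_of_isLUB (isIrreducible_biUnion_coe hirr) hA] at hx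
  exact closure_minimal hunion hpreimage hx

end Suprema

theorem prec_of_tri [Preorder α] {A' A : OrderSob α} (h : Tri A' A) : Prec A' A := by
  let _ : TopologicalSpace α := scott α univ
  let _ : TopologicalSpace (OrderSob α) := scott (OrderSob α) univ
  have _ : IsScott α univ := ⟨rfl⟩
  have _ : IsScott (OrderSob α) univ := ⟨rfl⟩
  obtain ⟨x, hx, hA'x⟩ := tri_iff_exists_le_principal.1 h
  intro 𝒜 hclosed hirr B hB hAB
  have hmem : principal x ∈ 𝒜 := principal_mem_of_mem_of_isLUB
    (scottClosed_iff_isClosed.1 hclosed) (scottIrred_iff_isIrreducible.1 hirr) hB (hAB hx)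
  exact hclosed.1 hA'x hmem

theorem scottClosed_setOf_prec [Preorder α] (x : α) : ScottClosed {x' : α | Prec x' x} := by
  let _ : TopologicalSpace α := scott α univ
  have _ : IsScott α univ := ⟨rfl⟩
  simp only [Prec, ofPred_forall, scottClosed_iff_isClosed]
  exact isClosed_iInter fun S => isClosed_iInter fun hS => isClosed_iInter fun _ =>
    isClosed_iInter fun _ => isClosed_iInter fun _ => isClosed_iInter fun _ => hS

theorem tri_prec_and_dominated_iff_general [Preorder α] :
    (∀ A' A : OrderSob α, Tri A' A → Prec A' A) ∧
    (Dominated α ↔ ∀ A' A : OrderSob α, Prec A' A → Tri A' A) := by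
  refine ⟨fun _ _ => prec_of_tri, fun hdom A' A hprec => ?_, fun htri A => ?_⟩
  · exact hprec (Nabla A) (hdom A) (scottIrred_nabla A) A (isLUB_nabla A) le_rfl
  · have hnabla : Nabla A = {A' | Prec A' A} := Set.ext fun A' => ⟨prec_of_tri, htri A' A⟩
    exact hnabla ▸ scottClosed_setOf_prec A

/-- ◁ implies ≺ on D̂; and D is dominated iff conversely ≺ implies ◁. -/
theorem tri_prec_and_dominated_iff [PartialOrder α] (hD : IsDcpo α) :
    (∀ A' A : OrderSob α, Tri A' A → Prec A' A) ∧
    (Dominated α ↔ ∀ A' A : OrderSob α, Prec A' A → Tri A' A) := by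
  exact tri_prec_and_dominated_iff_general

end HoZhao
end

section
/- Every dcpo that is sober in its Scott topology is dominated. (More precisely: if every closed irreducible subset of the dcpo D is of the form ↓x for some x ∈ D, then D is dominated.) -/
namespace HoZhao

variable {α : Type*}

theorem scottClosed_Iic_s11 [Preorder α] (a : α) : ScottClosed (Set.Iic a) :=
  ⟨isLowerSet_Iic a, fun _ hd _ _ _ hb => hb.2 hd⟩

theorem Tri.le [Preorder α] {A' A : OrderSob α} : Tri A' A → A' ≤ A :=
  fun ⟨_, hx, hA'⟩ _ hy => A.2.1.1 (hA' hy) hx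

theorem tri_iff_le_of_isGreatest [Preorder α] {A' A : OrderSob α} {x : α}
    (hx : IsGreatest (A : Set α) x) : Tri A' A ↔ A' ≤ A :=
  ⟨Tri.le, fun h => ⟨x, hx.1, fun _ hy => hx.2 (h hy)⟩⟩

theorem nabla_eq_Iic_of_isGreatest [Preorder α] {A : OrderSob α} {x : α}
    (hx : IsGreatest (A : Set α) x) : Nabla A = Set.Iic A :=
  Set.ext fun _ => tri_iff_le_of_isGreatest hx

theorem sober_dominated_general [Preorder α]
    (hsob : ∀ A : Set α, ScottClosed A → ScottIrred A → ∃ x : α, A = {y : α | y ≤ x}) :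
    Dominated α := by
  intro A
  obtain ⟨x, hx⟩ := hsob A A.2.1 A.2.2
  have hgreatest : IsGreatest (A : Set α) x := hx ▸ isGreatest_Iic
  rw [nabla_eq_Iic_of_isGreatest hgreatest]
  exact scottClosed_Iic_s11 A

/-- every dcpo sober in its Scott topology (every closed irreducible subset
is a principal downset) is dominated. -/
theorem sober_dominated [PartialOrder α] (hD : IsDcpo α)
    (hsob : ∀ A : Set α, ScottClosed A → ScottIrred A → ∃ x : α, A = {y : α | y ≤ x}) :
    Dominated α :=
  sober_dominated_general hsob

end HoZhao
end
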